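/- arXiv:2601.13363 — 11 statements merged into one kernel-verified Lean document; each statement's English description precedes it below -/
import Mathlib

section
/- Let (X,d) be an ultrametric space with distance set D(X) and center of distances C(X). If diam X belongs to D(X), then diam X belongs to C(X). -/
open scoped ENNReal

/-- The distance set `D(X) = {d(x,y) : x,y ∈ X}` of a metric space, with distances
recorded as extended non-negative reals. -/
def distSet (X : Type*) [MetricSpace X] : Set ℝ≥0∞ :=
  {t | ∃ x y : X, edist x y = t}

/-- The center of distances `C(X) = {t ∈ D(X) : ∀ p ∈ X, ∃ x ∈ X, d(p,x) = t}`. -/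
def centerOfDistances (X : Type*) [MetricSpace X] : Set ℝ≥0∞ :=
  {t | t ∈ distSet X ∧ ∀ p : X, ∃ x : X, edist p x = t}

/-- Let `(X,d)` be an ultrametric space. If `diam X ∈ D(X)`,
then `diam X ∈ C(X)`. -/
theorem diam_mem_centerOfDistances
    {X : Type*} [MetricSpace X] [IsUltrametricDist X]
    (h : EMetric.diam (Set.univ : Set X) ∈ distSet X) :
    EMetric.diam (Set.univ : Set X) ∈ centerOfDistances X := by
  refine ⟨h, fun p => ?_⟩
  obtain ⟨x, y, hxy⟩ := h
  have hle : ∀ a b : X, edist a b ≤ EMetric.diam (Set.univ : Set X) := fun a b =>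
    Metric.edist_le_ediam_of_mem (Set.mem_univ a) (Set.mem_univ b)
  have hmax : dist x y ≤ max (dist x p) (dist p y) := dist_triangle_max x p y
  rcases le_max_iff.mp hmax with h1 | h1
  · refine ⟨x, le_antisymm (hle p x) ?_⟩
    rw [← hxy, edist_comm p x, edist_dist, edist_dist]
    exact ENNReal.ofReal_le_ofReal h1
  · refine ⟨y, le_antisymm (hle p y) ?_⟩
    rw [← hxy, edist_dist, edist_dist]
    exact ENNReal.ofReal_le_ofReal h1
end

section
/- Let T be a tree (a connected acyclic simple graph) and let l : V(T) → [0,∞) be a labeling. Define d_l : V(T) × V(T) → [0,∞) by d_l(u,v) = max of l(w) over all vertices w on the unique path in T joining u and v when u ≠ v, and d_l(u,u) = 0. Then d_l is an ultrametric on V(T) if and only if max{l(u), l(v)} > 0 holds for every edge {u,v} of T. -/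
open scoped Classical

/-- The ultrametric-candidate `d_l` generated by a labeling `l` on the vertex set of a
tree `G`: for `u ≠ v` it is the maximum of `l` over the vertices of the unique path
joining `u` and `v`, and `d_l(u,u) = 0`.  (The fold starts at `l u`, and `u` itself lies
on the path, so the value is exactly the maximum of `l` over the path's vertices.) -/
noncomputable def dl {V : Type*} {G : SimpleGraph V} (hG : G.IsTree) (l : V → ℝ)
    (u v : V) : ℝ :=
  if u = v then 0
  else (((hG.existsUnique_path u v).exists.choose.support).map l).foldr max (l u)

/-- `d` is an ultrametric on `V`: it is symmetric, vanishes exactly on the diagonal,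
is positive off the diagonal, and satisfies the strong triangle inequality. -/
def IsUltrametricOn {V : Type*} (d : V → V → ℝ) : Prop :=
  (∀ u v, d u v = d v u) ∧ (∀ u, d u u = 0) ∧ (∀ u v, u ≠ v → 0 < d u v) ∧
    (∀ x y z, d x y ≤ max (d x z) (d z y))

/-- `dl u v ≤ c` iff all labels on a given path are at most `c`. -/
lemma dl_le_iff {V : Type*} {G : SimpleGraph V} (hG : G.IsTree) (l : V → ℝ)
    {u v : V} (huv : u ≠ v) (p : G.Walk u v) (hp : p.IsPath) (c : ℝ) :
    dl hG l u v ≤ c ↔ ∀ w ∈ p.support, l w ≤ c := by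
  have key : ∀ (L : List V) (a : ℝ),
      (L.map l).foldr max a ≤ c ↔ (∀ w ∈ L, l w ≤ c) ∧ a ≤ c := by
    intro L a
    induction L with
    | nil => simp
    | cons x L ih =>
      rw [List.map_cons, List.foldr_cons, max_le_iff, ih, List.forall_mem_cons, and_assoc]
  have hc := (hG.existsUnique_path u v).exists.choose_spec
  have he : (hG.existsUnique_path u v).exists.choose = p :=
    (hG.existsUnique_path u v).unique hc hp
  unfold dl
  rw [if_neg huv, he, key]
  exact ⟨fun h => h.1, fun h => ⟨h, h u p.start_mem_support⟩⟩

/-- Labels on any walk bound `dl`. -/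
lemma dl_le_of_walk {V : Type*} {G : SimpleGraph V} (hG : G.IsTree) (l : V → ℝ)
    {u v : V} (huv : u ≠ v) (p : G.Walk u v) (c : ℝ) (h : ∀ w ∈ p.support, l w ≤ c) :
    dl hG l u v ≤ c :=
  (dl_le_iff hG l huv p.bypass p.bypass_isPath c).2
    fun w hw => h w (p.support_bypass_subset_support hw)

/-- For a tree `G` with labeling `l : V → [0,∞)`, the map `d_l` is an
ultrametric on the vertex set if and only if `max {l u, l v} > 0` for every edge
`{u,v}` of the tree. -/
theorem dl_isUltrametric_iff {V : Type*} {G : SimpleGraph V} (hG : G.IsTree)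
    (l : V → ℝ) (hl0 : ∀ v, 0 ≤ l v) :
    IsUltrametricOn (dl hG l) ↔ ∀ u v : V, G.Adj u v → 0 < max (l u) (l v) := by
  have ex : ∀ u v, ∃ p : G.Walk u v, p.IsPath := fun u v => (hG.existsUnique_path u v).exists
  have self : ∀ u, dl hG l u u = 0 := fun u => by simp [dl]
  have nonneg : ∀ u v, 0 ≤ dl hG l u v := by
    intro u v
    by_cases h : u = v
    · subst h; rw [self]
    · obtain ⟨p, hp⟩ := ex u v
      exact (hl0 u).trans ((dl_le_iff hG l h p hp _).1 le_rfl u p.start_mem_support)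
  have symm : ∀ u v, dl hG l u v ≤ dl hG l v u := by
    intro u v
    by_cases h : u = v
    · subst h; exact le_rfl
    · obtain ⟨p, hp⟩ := ex v u
      refine dl_le_of_walk hG l h p.reverse _ fun w hw => ?_
      exact (dl_le_iff hG l (Ne.symm h) p hp _).1 le_rfl w (by simpa using hw)
  constructor
  · rintro ⟨-, -, hpos, -⟩ u v huv
    refine (hpos u v huv.ne).trans_le (dl_le_of_walk hG l huv.ne huv.toWalk _ fun w hw => ?_)
    have hw' : w = u ∨ w = v := by simpa using hw
    rcases hw' with rfl | rfl
    · exact le_max_left _ _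
    · exact le_max_right _ _
  · intro hE
    refine ⟨fun u v => le_antisymm (symm u v) (symm v u), self, ?_, ?_⟩
    · intro u v huv
      by_contra hn
      obtain ⟨p, hp⟩ := ex u v
      have hle := (dl_le_iff hG l huv p hp 0).1 (not_lt.1 hn)
      cases p with
      | nil => exact huv rfl
      | cons a q =>
        have h1 := hle u (by simp)
        have h2 := hle _ (by rw [SimpleGraph.Walk.support_cons]
                             exact List.mem_cons_of_mem _ q.start_mem_support)
        exact absurd (hE _ _ a) (not_lt.2 (max_le h1 h2))
    · intro x y z
      by_cases hxy : x = y
      · subst hxy; rw [self]; exact le_max_of_le_left (nonneg _ _)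
      by_cases hxz : x = z
      · subst hxz; exact le_max_right _ _
      by_cases hzy : z = y
      · subst hzy; exact le_max_left _ _
      obtain ⟨p, hp⟩ := ex x z
      obtain ⟨q, hq⟩ := ex z y
      refine dl_le_of_walk hG l hxy (p.append q) _ fun w hw => ?_
      rcases (SimpleGraph.Walk.mem_support_append_iff p q).1 hw with h | h
      · exact le_max_of_le_left ((dl_le_iff hG l hxz p hp _).1 le_rfl w h)
      · exact le_max_of_le_right ((dl_le_iff hG l hzy q hq _).1 le_rfl w h)
end

section
/- Let (T,l) be a labeled tree with a non-degenerate labeling l : V(T) → [0,∞) satisfying D(V(T)) = {l(u) : u ∈ V(T)}, where D(V(T)) is the distance set of the ultrametric space (V(T), d_l). Then every real number α with 0 < α < diam V(T) does not belong to the center of distances C(V(T)) of (V(T), d_l). -/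
open scoped Classical

lemma le_foldr_max_aux (L : List ℝ) (a : ℝ) : a ≤ L.foldr max a := by
  induction L with
  | nil => simp
  | cons b L ih => exact le_trans ih (le_max_right _ _)

lemma lt_foldr_max_aux (L : List ℝ) (a α : ℝ) (h : α < L.foldr max a) :
    α < a ∨ ∃ b ∈ L, α < b := by
  induction L with
  | nil => exact Or.inl h
  | cons b L ih =>
    rw [List.foldr_cons, lt_max_iff] at h
    rcases h with h | h
    · exact Or.inr ⟨b, by simp, h⟩
    · rcases ih h with h | ⟨c, hc, h⟩
      · exact Or.inl h
      · exact Or.inr ⟨c, by simp [hc], h⟩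

/-- Let `(T,l)` be a labeled tree with a non-degenerate labeling
`l : V(T) → [0,∞)` satisfying `D(V(T)) = {l(u) : u ∈ V(T)}`.  Then every real `α`
with `0 < α < diam V(T)` (i.e. `0 < α` and some distance exceeds `α`) does not
belong to the center of distances `C(V(T))` of `(V(T), d_l)`. -/
theorem not_mem_centerOfDistances_of_lt_diam
    {V : Type*} {G : SimpleGraph V} (hG : G.IsTree) (l : V → ℝ)
    (hl0 : ∀ v, 0 ≤ l v) (hl : ∀ u v : V, G.Adj u v → 0 < max (l u) (l v))
    (hD : {t : ℝ | ∃ u v : V, dl hG l u v = t} = Set.range l)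
    (α : ℝ) (hα : 0 < α) (hα' : ∃ u v : V, α < dl hG l u v) :
    ¬((∃ u v : V, dl hG l u v = α) ∧ ∀ p : V, ∃ x : V, dl hG l p x = α) := by
  rintro ⟨-, hC⟩
  have key : ∃ w, α < l w := by
    obtain ⟨u, v, h⟩ := hα'
    unfold dl at h
    split_ifs at h with huv
    · exact absurd h (not_lt.mpr hα.le)
    · rcases lt_foldr_max_aux _ _ _ h with h | ⟨b, hb, h⟩
      · exact ⟨u, h⟩
      · obtain ⟨w, -, rfl⟩ := List.mem_map.mp hb
        exact ⟨w, h⟩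
  obtain ⟨w, hw⟩ := key
  obtain ⟨x, hx⟩ := hC w
  unfold dl at hx
  split_ifs at hx with hwx
  · exact hα.ne hx
  · exact absurd (le_foldr_max_aux _ _) (not_le.mpr (hx.trans_lt hw))
end

section
/- Let (X,d) be a UT-space with at least two points, let D(X) be its distance set and C(X) its center of distances. Then either C(X) = {0} or C(X) = {0, diam X}; moreover, the equality C(X) = {0, diam X} holds if and only if diam X ∈ D(X). -/
open scoped Classical ENNReal

universe u

/-- `(X,d)` is a **UT-space**: it is isometric to `(V(T), d_l)` for some labeled tree
`(T,l)` with a non-degenerate labeling `l : V(T) → [0,∞)`. -/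
def IsUTSpace (X : Type u) [MetricSpace X] : Prop :=
  ∃ (V : Type u) (G : SimpleGraph V) (hG : G.IsTree) (l : V → ℝ),
    (∀ v, 0 ≤ l v) ∧
    (∀ u v : V, G.Adj u v → 0 < max (l u) (l v)) ∧
    ∃ Φ : X → V, Function.Bijective Φ ∧ ∀ x y : X, dist x y = dl hG l (Φ x) (Φ y)

theorem foldr_max_ge (L : List ℝ) (a : ℝ) :
    a ≤ L.foldr max a ∧ (∀ b ∈ L, b ≤ L.foldr max a) ∧
      (L.foldr max a = a ∨ L.foldr max a ∈ L) := by
  induction L with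
  | nil => simp
  | cons c L ih =>
    obtain ⟨h1, h2, h3⟩ := ih
    refine ⟨le_trans h1 (le_max_right _ _), ?_, ?_⟩
    · intro b hb
      rcases List.mem_cons.1 hb with rfl | hb
      · exact le_max_left _ _
      · exact le_trans (h2 b hb) (le_max_right _ _)
    · simp only [List.foldr_cons]
      rcases max_choice c (L.foldr max a) with h | h
      · right; rw [h]; simp
      · rw [h]
        rcases h3 with h3 | h3
        · exact Or.inl h3
        · exact Or.inr (List.mem_cons_of_mem _ h3)

theorem exists_label {X : Type u} [MetricSpace X] (hX : IsUTSpace X) :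
    ∃ L : X → ℝ, (∀ x y : X, x ≠ y → L x ≤ dist x y) ∧
      (∀ x y : X, x ≠ y → ∃ w, L w = dist x y) := by
  obtain ⟨V, G, hG, l, -, -, Φ, hΦ, hd⟩ := hX
  refine ⟨fun x => l (Φ x), ?_, ?_⟩
  · intro x y hxy
    rw [hd, dl, if_neg (fun h => hxy (hΦ.1 h))]
    exact (foldr_max_ge _ _).1
  · intro x y hxy
    rw [hd, dl, if_neg (fun h => hxy (hΦ.1 h))]
    rcases (foldr_max_ge (((hG.existsUnique_path (Φ x) (Φ y)).exists.choose.support).map l)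
      (l (Φ x))).2.2 with h | h
    · exact ⟨x, h.symm⟩
    · obtain ⟨v, -, hv⟩ := List.mem_map.1 h
      obtain ⟨w, rfl⟩ := hΦ.2 v
      exact ⟨w, hv⟩

/-- Let `(X,d)` be a UT-space with at least two points.  Then either
`C(X) = {0}` or `C(X) = {0, diam X}`; moreover, `C(X) = {0, diam X}` holds if and
only if `diam X ∈ D(X)`. -/
theorem centerOfDistances_of_UT
    {X : Type u} [MetricSpace X] [Nontrivial X] (hX : IsUTSpace X) :
    (centerOfDistances X = {0} ∨
      centerOfDistances X = {0, EMetric.diam (Set.univ : Set X)}) ∧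
    (centerOfDistances X = {0, EMetric.diam (Set.univ : Set X)} ↔
      EMetric.diam (Set.univ : Set X) ∈ distSet X) := by
  obtain ⟨L, hL, hw⟩ := exists_label hX
  have hle : ∀ x y : X, edist x y ≤ EMetric.diam (Set.univ : Set X) := fun x y =>
    Metric.edist_le_ediam_of_mem (Set.mem_univ x) (Set.mem_univ y)
  have h0 : (0 : ℝ≥0∞) ∈ centerOfDistances X := by
    obtain ⟨x⟩ := (inferInstance : Nonempty X)
    exact ⟨⟨x, x, edist_self x⟩, fun p => ⟨p, edist_self p⟩⟩
  have hB : ∀ t ∈ centerOfDistances X, t ≠ 0 → t = EMetric.diam (Set.univ : Set X) := by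
    rintro t ⟨⟨a, b, hab⟩, ht⟩ ht0
    apply le_antisymm
    · rw [← hab]; exact hle a b
    · refine Metric.ediam_le fun x _ y _ => ?_
      by_cases hxy : x = y
      · subst hxy; simp
      obtain ⟨w, hw⟩ := hw x y hxy
      obtain ⟨z, hz⟩ := ht w
      have hwz : w ≠ z := by
        rintro rfl
        exact ht0 (by rw [← hz, edist_self])
      rw [← hz, edist_dist, edist_dist, ← hw]
      exact ENNReal.ofReal_le_ofReal (hL w z hwz)
  have hA : EMetric.diam (Set.univ : Set X) ∈ distSet X →
      EMetric.diam (Set.univ : Set X) ∈ centerOfDistances X := by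
    intro h
    refine ⟨h, fun p => ?_⟩
    obtain ⟨x, y, hxy⟩ := h
    have hne : x ≠ y := by
      rintro rfl
      obtain ⟨a, b, hab⟩ := exists_pair_ne X
      have := hle a b
      rw [← hxy, edist_self] at this
      exact hab (edist_eq_zero.1 (le_antisymm this zero_le))
    obtain ⟨w, hw⟩ := hw x y hne
    have key : ∀ z, w ≠ z → edist w z = EMetric.diam (Set.univ : Set X) := by
      intro z hz
      refine le_antisymm (hle w z) ?_
      rw [← hxy, edist_dist, edist_dist, ← hw]
      exact ENNReal.ofReal_le_ofReal (hL w z hz)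
    by_cases hp : w = p
    · subst hp
      obtain ⟨z, hz⟩ := exists_ne w
      exact ⟨z, key z hz.symm⟩
    · exact ⟨w, by rw [edist_comm]; exact key p hp⟩
  have hC : EMetric.diam (Set.univ : Set X) ∈ distSet X →
      centerOfDistances X = {0, EMetric.diam (Set.univ : Set X)} := by
    intro h
    ext t
    constructor
    · intro ht
      by_cases h : t = 0
      · exact Or.inl h
      · exact Or.inr (hB t ht h)
    · rintro (rfl | rfl)
      · exact h0
      · exact hA h
  refine ⟨?_, fun h => ?_, hC⟩
  · by_cases h : EMetric.diam (Set.univ : Set X) ∈ distSet X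
    · exact Or.inr (hC h)
    · left
      ext t
      constructor
      · intro ht
        by_contra h'
        exact h (hB t ht h' ▸ ht.1)
      · rintro rfl
        exact h0
  · have : EMetric.diam (Set.univ : Set X) ∈ centerOfDistances X := by
      rw [h]; exact Or.inr rfl
    exact this.1
end

section
/- Let (X,d) be a UT-space with at least two points and let C(X) be its center of distances. Then C(X) = {0, diam X} holds if and only if X is a centered sphere in (X,d) whose radius equals diam X, i.e., there exists c ∈ X such that X = {x ∈ X : d(x,c) = diam X} ∪ {c}. -/
open scoped Classical ENNReal

universe u

theorem foldr_max_eq_label {V : Type*} (l : V → ℝ) (u : V) (L : List V) :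
    ∃ w, (L.map l).foldr max (l u) = l w := by
  induction L with
  | nil => exact ⟨u, rfl⟩
  | cons a L ih =>
    obtain ⟨w, hw⟩ := ih
    simp only [List.map_cons, List.foldr_cons, hw]
    rcases max_choice (l a) (l w) with h | h
    · exact ⟨a, h⟩
    · exact ⟨w, h⟩

theorem label_le_foldr_max {V : Type*} (l : V → ℝ) (b : ℝ) (L : List V) (v : V) (hv : v ∈ L) :
    l v ≤ (L.map l).foldr max b := by
  induction L with
  | nil => simp at hv
  | cons a L ih =>
    simp only [List.map_cons, List.foldr_cons]
    rcases List.mem_cons.1 hv with h | h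
    · rw [h]; exact le_max_left _ _
    · exact (ih h).trans (le_max_right _ _)

/-- Let `(X,d)` be a UT-space with at least two points.  Then
`C(X) = {0, diam X}` holds if and only if `X` is a centered sphere in `(X,d)` whose
radius equals `diam X`, i.e. there is `c ∈ X` with
`X = {x ∈ X : d(x,c) = diam X} ∪ {c}`. -/
theorem centerOfDistances_eq_iff_centeredSphere
    {X : Type u} [MetricSpace X] [Nontrivial X] (hX : IsUTSpace X) :
    centerOfDistances X = {0, EMetric.diam (Set.univ : Set X)} ↔
      ∃ c : X, (Set.univ : Set X) =
        {x : X | edist x c = EMetric.diam (Set.univ : Set X)} ∪ {c} := by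
  have hpos : EMetric.diam (Set.univ : Set X) ≠ 0 := by
    obtain ⟨a, b, hab⟩ := exists_pair_ne X
    intro h0
    have h1 : edist a b ≤ EMetric.diam (Set.univ : Set X) :=
      Metric.edist_le_ediam_of_mem (Set.mem_univ a) (Set.mem_univ b)
    rw [h0] at h1
    exact hab (edist_le_zero.1 h1)
  constructor
  · intro hC
    have hD : EMetric.diam (Set.univ : Set X) ∈ centerOfDistances X := by
      rw [hC]; simp
    obtain ⟨⟨a, b, hab⟩, -⟩ := hD
    have hne : a ≠ b := by
      rintro rfl
      rw [edist_self] at hab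
      exact hpos hab.symm
    obtain ⟨V, G, hG, l, -, -, Φ, hΦ, hd⟩ := hX
    obtain ⟨w, hw⟩ : ∃ w, dist a b = l w := by
      rw [hd a b, dl, if_neg (fun h => hne (hΦ.1 h))]
      exact foldr_max_eq_label _ _ _
    obtain ⟨c, rfl⟩ := hΦ.2 w
    refine ⟨c, (Set.eq_univ_of_forall fun x => ?_).symm⟩
    by_cases hxc : x = c
    · exact Or.inr hxc
    · refine Or.inl (le_antisymm
        (Metric.edist_le_ediam_of_mem (Set.mem_univ x) (Set.mem_univ c)) ?_)
      rw [← hab, edist_dist, edist_dist]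
      apply ENNReal.ofReal_le_ofReal
      rw [hw, hd x c, dl, if_neg (fun h => hxc (hΦ.1 h))]
      exact label_le_foldr_max _ _ _ _ (SimpleGraph.Walk.end_mem_support _)
  · rintro ⟨c, hc⟩
    have hc' : ∀ x : X, x ≠ c → edist x c = EMetric.diam (Set.univ : Set X) := by
      intro x hx
      have h : x ∈ (Set.univ : Set X) := Set.mem_univ x
      rw [hc] at h
      rcases h with h | h
      · exact h
      · exact absurd h hx
    obtain ⟨y, hy⟩ := exists_ne c
    ext t
    constructor
    · rintro ⟨-, ht⟩
      obtain ⟨x, hx⟩ := ht c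
      by_cases hxc : x = c
      · left; rw [← hx, hxc, edist_self]
      · right; rw [← hx, edist_comm]; exact hc' x hxc
    · rintro (h | h)
      · rw [h]
        exact ⟨⟨c, c, edist_self c⟩, fun p => ⟨p, edist_self p⟩⟩
      · rw [h]
        refine ⟨⟨y, c, hc' y hy⟩, fun p => ?_⟩
        by_cases hp : p = c
        · exact ⟨y, by rw [hp, edist_comm]; exact hc' y hy⟩
        · exact ⟨c, hc' p hp⟩
end

section
/- Let (X,d) be an ultrametric space and let B be an open ball in (X,d). Then B is a centered sphere in (X,d) if and only if B is a centered sphere in the subspace (B, d|_{B×B}). -/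
/-- A subset `S` of a metric space is a **centered sphere** if there are `c ∈ S` and
`r ∈ [0,∞)` with `S = {x : d(x,c) = r} ∪ {c}`. -/
def IsCenteredSphere {X : Type*} [MetricSpace X] (S : Set X) : Prop :=
  ∃ c ∈ S, ∃ r : ℝ, 0 ≤ r ∧ S = {x : X | dist x c = r} ∪ {c}

/-- Let `(X,d)` be an ultrametric space and let `B` be an open ball
in `(X,d)`.  Then `B` is a centered sphere in `(X,d)` if and only if `B` is a
centered sphere in the subspace `(B, d|_{B×B})`. -/
theorem ball_isCenteredSphere_iff_isCenteredSphere_subspace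
    {X : Type*} [MetricSpace X] [IsUltrametricDist X] (c : X) (r : ℝ) (hr : 0 < r) :
    IsCenteredSphere (Metric.ball c r) ↔
      IsCenteredSphere (Set.univ : Set (Metric.ball c r)) := by
  have key : ∀ p ∈ Metric.ball c r, Metric.ball c r = Metric.ball p r := fun p hp =>
    (IsUltrametricDist.ball_eq_of_mem hp)
  constructor
  · rintro ⟨p, hp, s, hs, h⟩
    refine ⟨⟨p, hp⟩, Set.mem_univ _, s, hs, ?_⟩
    symm
    rw [Set.eq_univ_iff_forall]
    rintro ⟨x, hx⟩
    have hx' := hx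
    rw [h] at hx'
    rcases hx' with hx' | hx'
    · exact Or.inl hx'
    · exact Or.inr (Subtype.ext hx')
  · rintro ⟨⟨p, hp⟩, -, s, hs, h⟩
    have h' : ∀ x ∈ Metric.ball c r, dist x p = s ∨ x = p := by
      intro x hx
      have hm : (⟨x, hx⟩ : Metric.ball c r) ∈ (Set.univ : Set (Metric.ball c r)) :=
        Set.mem_univ _
      rw [h] at hm
      rcases hm with hm | hm
      · exact Or.inl hm
      · exact Or.inr (congrArg Subtype.val hm)
    by_cases hsr : s < r
    · refine ⟨p, hp, s, hs, Set.Subset.antisymm (fun x hx => h' x hx) ?_⟩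
      rintro x (hx | hx)
      · rw [key p hp, Metric.mem_ball]
        exact lt_of_eq_of_lt hx hsr
      · rw [Set.mem_singleton_iff.1 hx]
        exact hp
    · refine ⟨p, hp, 0, le_rfl, Set.Subset.antisymm (fun x hx => ?_) ?_⟩
      · rcases h' x hx with hd | hd
        · rw [key p hp, Metric.mem_ball] at hx
          exact absurd (hd ▸ hx) hsr
        · exact Or.inr hd
      · rintro x (hx | hx)
        · rw [dist_eq_zero.1 hx]
          exact hp
        · rw [Set.mem_singleton_iff.1 hx]
          exact hp
end

section
/- Let (X,d) be a UT-space and let T = T(l) be a labeled tree with non-degenerate labeling such that (X,d) and (V(T), d_l) are isometric. Then for every open ball B of (X,d) there is a subtree T¹ of T such that (B, d|_{B×B}) is isometric to (V(T¹), d_{l¹}), where l¹ is the restriction of l to V(T¹). -/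
open scoped Classical

universe u

theorem foldr_max_lt {a r : ℝ} (L : List ℝ) :
    L.foldr max a < r ↔ a < r ∧ ∀ b ∈ L, b < r := by
  induction L with
  | nil => simp
  | cons x xs ih => simp only [List.foldr_cons, max_lt_iff, ih, List.forall_mem_cons]; tauto

theorem dl_eq_of_path {V : Type*} {G : SimpleGraph V} (hG : G.IsTree) (l : V → ℝ)
    {u v : V} (huv : u ≠ v) (p : G.Walk u v) (hp : p.IsPath) :
    dl hG l u v = (p.support.map l).foldr max (l u) := by
  have h : (hG.existsUnique_path u v).exists.choose = p :=
    (hG.existsUnique_path u v).unique (hG.existsUnique_path u v).exists.choose_spec hp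
  rw [dl, if_neg huv, h]

theorem dl_lt_of_mem {V : Type*} {G : SimpleGraph V} (hG : G.IsTree) (l : V → ℝ)
    {u v w : V} {r : ℝ} (hr : 0 < r) (p : G.Walk u v) (hp : p.IsPath)
    (hd : dl hG l u v < r) (hw : w ∈ p.support) : dl hG l u w < r := by
  by_cases huw : u = w
  · simpa [dl, huw] using hr
  have huv : u ≠ v := by
    rintro rfl
    have := SimpleGraph.Walk.isPath_iff_eq_nil.1 hp
    subst this
    simp at hw
    exact huw hw.symm
  rw [dl_eq_of_path hG l huv p hp, foldr_max_lt] at hd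
  rw [dl_eq_of_path hG l huw (p.takeUntil w hw) (hp.takeUntil hw), foldr_max_lt]
  refine ⟨hd.1, fun b hb => hd.2 b ?_⟩
  rw [List.mem_map] at hb ⊢
  obtain ⟨a, ha, rfl⟩ := hb
  exact ⟨a, p.support_takeUntil_subset_support hw ha, rfl⟩

/-- Let `(X,d)` be a UT-space and `T = T(l)` a labeled tree with a
non-degenerate labeling such that `(X,d)` and `(V(T), d_l)` are isometric.  Then for
every open ball `B` of `(X,d)` there is a subtree `T¹` of `T` (a subgraph which is a
tree) such that `(B, d|_{B×B})` is isometric to `(V(T¹), d_{l¹})`, where `l¹` is the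
restriction of `l` to `V(T¹)`. -/
theorem ball_isometric_to_labeled_subtree
    {X : Type u} [MetricSpace X] {V : Type u} {G : SimpleGraph V} (hG : G.IsTree)
    (l : V → ℝ) (hl0 : ∀ v, 0 ≤ l v)
    (hl : ∀ u v : V, G.Adj u v → 0 < max (l u) (l v))
    (Φ : X → V) (hΦ : Function.Bijective Φ)
    (hiso : ∀ x y : X, dist x y = dl hG l (Φ x) (Φ y))
    (c : X) (r : ℝ) (hr : 0 < r) :
    ∃ (H : G.Subgraph) (hH : H.coe.IsTree),
      ∃ Ψ : Metric.ball c r → H.verts, Function.Bijective Ψ ∧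
        ∀ x y : Metric.ball c r,
          dist x y = dl hH (fun w : H.verts => l w.1) (Ψ x) (Ψ y) := by
  set S : Set V := Set.image Φ (Metric.ball c r) with hS
  have hmem : ∀ v, v ∈ S ↔ dl hG l (Φ c) v < r := by
    intro v
    obtain ⟨x, rfl⟩ := hΦ.2 v
    rw [hS, hΦ.1.mem_set_image, Metric.mem_ball, dist_comm, hiso]
  have hcS : Φ c ∈ S := ⟨c, Metric.mem_ball_self hr, rfl⟩
  have hconn : (G.induce S).Connected := by
    refine G.induce_connected_of_patches (Φ c) hcS (fun {v} hv => ?_)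
    obtain ⟨p, hp⟩ := (hG.existsUnique_path (Φ c) v).exists
    refine ⟨{w | w ∈ p.support}, fun w hw => ?_, p.start_mem_support, p.end_mem_support, ?_⟩
    · exact (hmem w).2 (dl_lt_of_mem hG l hr p hp ((hmem v).1 hv) hw)
    · exact p.connected_induce_support _ _
  let H : G.Subgraph := (⊤ : G.Subgraph).induce S
  have hH : H.coe.IsTree :=
    ⟨(SimpleGraph.connected_induce_iff.1 hconn).coe, hG.isAcyclic.subgraph H⟩
  refine ⟨H, hH, fun x => ⟨Φ x.1, x.1, x.2, rfl⟩, ⟨?_, ?_⟩, ?_⟩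
  · intro x y h
    exact Subtype.ext (hΦ.1 (congrArg Subtype.val h))
  · rintro ⟨_, x, hx, rfl⟩
    exact ⟨⟨x, hx⟩, rfl⟩
  · intro x y
    rw [Subtype.dist_eq, hiso]
    by_cases hxy : Φ x.1 = Φ y.1
    · simp [dl, hxy]
    set a : H.verts := ⟨Φ x.1, x.1, x.2, rfl⟩ with ha
    set b : H.verts := ⟨Φ y.1, y.1, y.2, rfl⟩ with hb
    have hab : a ≠ b := fun h => hxy (congrArg Subtype.val h)
    obtain ⟨p, hp⟩ := (hH.existsUnique_path a b).exists
    rw [dl_eq_of_path hH _ hab p hp]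
    have := dl_eq_of_path hG l (u := H.hom a) (v := H.hom b) hxy (p.map H.hom)
      (SimpleGraph.Walk.map_isPath_of_injective H.hom_injective hp)
    rw [SimpleGraph.Walk.support_map, List.map_map] at this
    exact this
end

section
/- Let (X,d) be an ultrametric space and for each p ∈ X write D_p(X) = {d(p,x) : x ∈ X}. If every open ball of (X,d) is a centered sphere in (X,d), then for every p ∈ X and every r ∈ (0,∞) the set D_p(X) ∩ [0,r) has a greatest element. Moreover, if (X,d) is a UT-space and for every p ∈ X and every r ∈ (0,∞) the set D_p(X) ∩ [0,r) has a greatest element, then every open ball of (X,d) is a centered sphere in (X,d). -/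
open scoped Classical ENNReal

universe u

theorem foldr_max_le_iff (L : List ℝ) (a b : ℝ) :
    L.foldr max a ≤ b ↔ a ≤ b ∧ ∀ x ∈ L, x ≤ b := by
  induction L with
  | nil => simp
  | cons h t ih =>
    simp only [List.foldr_cons, max_le_iff, ih, List.mem_cons, forall_eq_or_imp]
    tauto

theorem foldr_max_mem (L : List ℝ) (a : ℝ) :
    L.foldr max a = a ∨ L.foldr max a ∈ L := by
  induction L with
  | nil => simp
  | cons h t ih =>
    simp only [List.foldr_cons, List.mem_cons]
    rcases max_choice h (t.foldr max a) with e | e <;> rw [e]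
    · simp
    · tauto

theorem dl_ge_left {V : Type*} {G : SimpleGraph V} (hG : G.IsTree) (l : V → ℝ)
    {u v : V} (h : u ≠ v) : l u ≤ dl hG l u v := by
  rw [dl, if_neg h]
  exact ((foldr_max_le_iff _ _ _).1 le_rfl).1

theorem dl_exists {V : Type*} {G : SimpleGraph V} (hG : G.IsTree) (l : V → ℝ)
    (hl : ∀ v, 0 ≤ l v)
    {u v : V} (h : u ≠ v) : ∃ w, l w = dl hG l u v ∧ dl hG l u w ≤ dl hG l u v := by
  have hp := (hG.existsUnique_path u v).exists.choose_spec
  have hdl : dl hG l u v =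
    (((hG.existsUnique_path u v).exists.choose.support).map l).foldr max (l u) := by
    rw [dl, if_neg h]
  generalize (hG.existsUnique_path u v).exists.choose = p at hp hdl
  have hpos : 0 ≤ dl hG l u v := (hl u).trans (dl_ge_left hG l h)
  have hle := (foldr_max_le_iff _ _ _).1 hdl.ge
  obtain ⟨w, hw, hlw⟩ : ∃ w ∈ p.support, l w = dl hG l u v := by
    rcases foldr_max_mem (p.support.map l) (l u) with e | e
    · exact ⟨u, p.start_mem_support, by rw [hdl, e]⟩
    · rw [← hdl] at e
      simpa using e
  refine ⟨w, hlw, ?_⟩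
  by_cases huw : u = w
  · subst huw
    rw [dl, if_pos rfl]
    exact hpos
  · have hq := (hG.existsUnique_path u w).exists.choose_spec
    have heq := (hG.existsUnique_path u w).unique hq (hp.takeUntil hw)
    conv_lhs => rw [dl, if_neg huw, heq]
    rw [foldr_max_le_iff]
    refine ⟨hle.1, fun x hx => hle.2 x ?_⟩
    obtain ⟨y, hy, rfl⟩ := List.mem_map.1 hx
    exact List.mem_map.2 ⟨y, p.support_takeUntil_subset_support hw hy, rfl⟩

/-- Let `(X,d)` be an ultrametric space and, for `p ∈ X`, let
`D_p(X) = {d(p,x) : x ∈ X}`.  If every open ball of `(X,d)` is a centered sphere in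
`(X,d)`, then for all `p ∈ X` and `r ∈ (0,∞)` the set `D_p(X) ∩ [0,r)` has a
greatest element.  Moreover, if `(X,d)` is a UT-space and for all `p ∈ X`,
`r ∈ (0,∞)` the set `D_p(X) ∩ [0,r)` has a greatest element, then every open ball of
`(X,d)` is a centered sphere in `(X,d)`. -/
theorem ball_centeredSphere_and_greatest_element
    {X : Type u} [MetricSpace X] [IsUltrametricDist X] :
    ((∀ (c : X) (r : ℝ), 0 < r → IsCenteredSphere (Metric.ball c r)) →
      ∀ (p : X) (r : ℝ), 0 < r →
        ∃ m : ℝ, ((∃ x : X, dist p x = m) ∧ 0 ≤ m ∧ m < r) ∧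
          ∀ t : ℝ, (∃ x : X, dist p x = t) → 0 ≤ t → t < r → t ≤ m) ∧
    (IsUTSpace X →
      (∀ (p : X) (r : ℝ), 0 < r →
        ∃ m : ℝ, ((∃ x : X, dist p x = m) ∧ 0 ≤ m ∧ m < r) ∧
          ∀ t : ℝ, (∃ x : X, dist p x = t) → 0 ≤ t → t < r → t ≤ m) →
      ∀ (c : X) (r : ℝ), 0 < r → IsCenteredSphere (Metric.ball c r)) := by
  constructor
  · intro H p r hr
    obtain ⟨c, hc, s, hs, hS⟩ := H p r hr
    have hmem : ∀ x, dist p x < r → dist x c = s ∨ x = c := by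
      intro x hx
      have : x ∈ Metric.ball p r := by rw [Metric.mem_ball, dist_comm]; exact hx
      rw [hS] at this
      simpa [or_comm] using this
    have hcr : dist p c < r := by rw [dist_comm]; exact hc
    have hpc := hmem p (by simpa using hr)
    by_cases hp : p = c
    · by_cases hy : ∃ y, dist p y < r ∧ y ≠ c
      · obtain ⟨y, hyr, hyc⟩ := hy
        refine ⟨dist p y, ⟨⟨y, rfl⟩, dist_nonneg, hyr⟩, ?_⟩
        rintro t ⟨x, rfl⟩ - hx
        have h1 := (hmem y hyr).resolve_right hyc
        rcases hmem x hx with h2 | h2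
        · rw [hp, dist_comm c x, dist_comm c y, h1, h2]
        · rw [h2, hp, dist_self]; exact dist_nonneg
      · refine ⟨0, ⟨⟨p, dist_self p⟩, le_rfl, hr⟩, ?_⟩
        rintro t ⟨x, rfl⟩ - hx
        have : x = c := by
          by_contra h
          exact hy ⟨x, hx, h⟩
        rw [this, hp, dist_self]
    · have h1 := hpc.resolve_right hp
      refine ⟨dist p c, ⟨⟨c, rfl⟩, dist_nonneg, hcr⟩, ?_⟩
      rintro t ⟨x, rfl⟩ - hx
      rcases hmem x hx with h2 | h2
      · refine (dist_triangle_max p c x).trans ?_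
        rw [dist_comm c x, h2, h1, max_self]
      · rw [h2]
  · rintro ⟨V, G, hG, l, hl, -, Φ, hΦ, hd⟩ H c r hr
    obtain ⟨m, ⟨⟨x, hx⟩, hm0, hmr⟩, hmax⟩ := H c r hr
    have hball : ∀ y, y ∈ Metric.ball c r ↔ dist c y ≤ m := by
      intro y
      rw [Metric.mem_ball, dist_comm]
      exact ⟨fun h => hmax _ ⟨y, rfl⟩ dist_nonneg h, fun h => h.trans_lt hmr⟩
    by_cases hcx : c = x
    · have hm : m = 0 := by rw [← hx, hcx, dist_self]
      refine ⟨c, Metric.mem_ball_self hr, 0, le_rfl, ?_⟩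
      ext y
      rw [hball, hm]
      simp [eq_comm]
    · obtain ⟨w', hw1, hw2⟩ := dl_exists hG l hl (fun h => hcx (hΦ.1 h) : Φ c ≠ Φ x)
      obtain ⟨w, rfl⟩ := hΦ.2 w'
      rw [← hd, ← hd, hx] at hw2
      rw [← hd, hx] at hw1
      refine ⟨w, (hball w).2 hw2, m, hm0, ?_⟩
      ext y
      rw [hball]
      simp only [Set.mem_union, Set.mem_ofPred_eq, Set.mem_singleton_iff]
      constructor
      · intro hy
        by_cases hyw : y = w
        · exact Or.inr hyw
        · left
          apply le_antisymm
          · refine (dist_triangle_max y c w).trans (max_le ?_ hw2)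
            rwa [dist_comm]
          · rw [dist_comm, hd, ← hw1]
            exact dl_ge_left hG l (fun h => hyw (hΦ.1 h).symm)
      · rintro (h | rfl)
        · refine (dist_triangle_max c w y).trans (max_le hw2 ?_)
          rw [dist_comm, h]
        · exact hw2
end

section
/- Let (X,d) be an ultrametric space. Then the following statements are equivalent: (i) every centered sphere of (X,d) is an open ball of (X,d); (ii) the metric d is equidistant, i.e., there is a constant k > 0 such that d(x,y) = k for all distinct x,y ∈ X; (iii) the set of open balls of (X,d) coincides with the set of centered spheres of (X,d). -/
/-- `S` is an open ball of the metric space `X`. -/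
def IsOpenBall {X : Type*} [MetricSpace X] (S : Set X) : Prop :=
  ∃ c : X, ∃ r : ℝ, 0 < r ∧ S = Metric.ball c r

theorem aux_one {X : Type*} [MetricSpace X] [IsUltrametricDist X]
    (h : ∀ S : Set X, IsCenteredSphere S → IsOpenBall S) :
    ∃ k : ℝ, 0 < k ∧ ∀ x y : X, x ≠ y → dist x y = k := by
  have key : ∀ c x y : X, x ≠ c → y ≠ c → ¬ dist x c < dist y c := by
    intro c x y hx hy hlt
    obtain ⟨a, s, hs, hS⟩ := h ({z : X | dist z c = dist y c} ∪ {c})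
      ⟨c, by simp, dist y c, dist_nonneg, rfl⟩
    have hc : c ∈ Metric.ball a s := by rw [← hS]; simp
    have hya : y ∈ Metric.ball a s := by rw [← hS]; simp
    rw [Metric.mem_ball] at hc hya
    have h1 : dist y c < s := lt_of_le_of_lt (dist_triangle_max y a c)
      (max_lt hya (by rwa [dist_comm]))
    have hxa : x ∈ Metric.ball a s := by
      rw [Metric.mem_ball]
      exact lt_of_le_of_lt (dist_triangle_max x c a) (max_lt (hlt.trans h1) hc)
    rw [← hS] at hxa
    rcases hxa with h2 | h2
    · exact hlt.ne h2
    · exact hx h2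
  have key2 : ∀ c x y : X, x ≠ c → y ≠ c → dist x c = dist y c := fun c x y hx hy =>
    le_antisymm (not_lt.1 (key c y x hy hx)) (not_lt.1 (key c x y hx hy))
  by_cases hX : ∃ z w : X, z ≠ w
  · obtain ⟨z, w, hzw⟩ := hX
    refine ⟨dist z w, dist_pos.2 hzw, fun x y hxy => ?_⟩
    by_cases hyw : y = w
    · subst hyw
      exact key2 _ _ _ hxy hzw
    · rw [key2 y x w hxy (Ne.symm hyw), dist_comm w y]
      exact key2 _ _ _ hyw hzw
  · push Not at hX
    exact ⟨1, one_pos, fun x y hxy => absurd (hX x y) hxy⟩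

theorem aux_two {X : Type*} [MetricSpace X]
    (h : ∃ k : ℝ, 0 < k ∧ ∀ x y : X, x ≠ y → dist x y = k) :
    {S : Set X | IsOpenBall S} = {S : Set X | IsCenteredSphere S} := by
  obtain ⟨k, hk, h⟩ := h
  ext S
  constructor
  · rintro ⟨c, r, hr, rfl⟩
    refine ⟨c, Metric.mem_ball_self hr, if k < r then k else 0, by split_ifs <;> linarith, ?_⟩
    ext x
    by_cases hx : x = c
    · subst hx; simp [hr]
    · have := h x c hx
      simp only [Metric.mem_ball, Set.mem_union, Set.mem_setOf_eq, Set.mem_singleton_iff, hx, this]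
      split_ifs with h1 <;> simp [h1, hk.ne']
  · rintro ⟨c, -, r, hr, rfl⟩
    refine ⟨c, if r = k then k + 1 else k, by split_ifs <;> linarith, ?_⟩
    ext x
    by_cases hx : x = c
    · subst hx
      simp only [Metric.mem_ball, Set.mem_union, Set.mem_singleton_iff, dist_self, or_true, true_iff]
      split_ifs <;> linarith
    · have := h x c hx
      simp only [Metric.mem_ball, Set.mem_union, Set.mem_setOf_eq, Set.mem_singleton_iff, hx, this]
      split_ifs with h1
      · simp [h1]
      · simp [Ne.symm h1]

/-- For an ultrametric space `(X,d)` the following are equivalent: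
(i) every centered sphere of `(X,d)` is an open ball of `(X,d)`;
(ii) the metric `d` is equidistant, i.e. there is `k > 0` with `d(x,y) = k` for all
distinct `x, y`;
(iii) the set of open balls of `(X,d)` coincides with the set of centered spheres. -/
theorem centeredSphere_subset_ball_iff_equidistant
    {X : Type*} [MetricSpace X] [IsUltrametricDist X] :
    ((∀ S : Set X, IsCenteredSphere S → IsOpenBall S) ↔
      ∃ k : ℝ, 0 < k ∧ ∀ x y : X, x ≠ y → dist x y = k) ∧
    ((∃ k : ℝ, 0 < k ∧ ∀ x y : X, x ≠ y → dist x y = k) ↔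
      {S : Set X | IsOpenBall S} = {S : Set X | IsCenteredSphere S}) := by
  have h31 : {S : Set X | IsOpenBall S} = {S : Set X | IsCenteredSphere S} →
      ∀ S : Set X, IsCenteredSphere S → IsOpenBall S := fun h S hS => by
    have h2 : S ∈ {S : Set X | IsCenteredSphere S} := hS
    rw [← h] at h2
    exact h2
  exact ⟨⟨aux_one, fun h => h31 (aux_two h)⟩, ⟨aux_two, fun h => aux_one (h31 h)⟩⟩
end

section
/- Let (X,d) be an ultrametric space with at least two points. Then (X,d) is weakly similar to an unbounded ultrametric space if and only if diam X does not belong to the distance set D(X). -/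
open scoped ENNReal

universe u

/-- The distance set `D(X) = {d(x,y) : x,y ∈ X}` as a set of real numbers. -/
def realDistSet (X : Type*) [MetricSpace X] : Set ℝ :=
  {t | ∃ x y : X, dist x y = t}

/-- `(X,d)` and `(Y,ρ)` are **weakly similar**: there is a bijection `Φ : X → Y` and a
strictly increasing bijection `f : D(Y) → D(X)` between the distance sets such that
`d(x,y) = f(ρ(Φ x, Φ y))` for all `x, y ∈ X`. -/
def WeaklySimilar (X : Type*) (Y : Type*) [MetricSpace X] [MetricSpace Y] : Prop :=
  ∃ Φ : X → Y, Function.Bijective Φ ∧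
    ∃ f : realDistSet Y → realDistSet X, StrictMono f ∧ Function.Bijective f ∧
      ∀ x y : X, dist x y = (f ⟨dist (Φ x) (Φ y), ⟨Φ x, Φ y, rfl⟩⟩ : ℝ)

/-- `(Y,ρ)` is an unbounded ultrametric space. -/
def IsUnboundedUltrametric (Y : Type*) [MetricSpace Y] : Prop :=
  IsUltrametricDist Y ∧ EMetric.diam (Set.univ : Set Y) = ⊤

theorem exists_of_strictMonoOn {X : Type u} [MetricSpace X] [IsUltrametricDist X]
    (g : ℝ → ℝ) (hg : StrictMonoOn g (realDistSet X)) (h0 : g 0 = 0)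
    (hub : ∀ M : ℝ, ∃ x y : X, M < g (dist x y)) :
    ∃ (Y : Type u) (mY : MetricSpace Y),
        @IsUnboundedUltrametric Y mY ∧ @WeaklySimilar X Y _ mY := by
  have mem : ∀ x y : X, dist x y ∈ realDistSet X := fun x y => ⟨x, y, rfl⟩
  have hmax : ∀ x y z : X, g (dist x z) ≤ max (g (dist x y)) (g (dist y z)) := by
    intro x y z
    rcases le_max_iff.1 (dist_triangle_max x y z) with h | h
    · exact le_max_of_le_left ((hg.le_iff_le (mem _ _) (mem _ _)).2 h)
    · exact le_max_of_le_right ((hg.le_iff_le (mem _ _) (mem _ _)).2 h)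
  have hnn : ∀ x y : X, 0 ≤ g (dist x y) := by
    intro x y
    have h := (hg.le_iff_le (mem x x) (mem x y)).2 (by simp)
    simpa [h0] using h
  let mY' : Unit → MetricSpace X := fun _ =>
    { dist := fun x y => g (dist x y)
      dist_self := fun x => by simp [h0]
      dist_comm := fun x y => by simp [dist_comm]
      dist_triangle := fun x y z => (hmax x y z).trans
        (max_le (by linarith [hnn y z]) (by linarith [hnn x y]))
      eq_of_dist_eq_zero := fun {x y} h => by
        have h' : g (dist x y) = g (dist x x) := by rw [dist_self, h0]; exact h
        have := hg.injOn (mem _ _) (mem _ _) h'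
        simpa using this }
  refine ⟨X, (mY' ()), ⟨@IsUltrametricDist.mk X (mY' ()).toDist hmax, ?_⟩, id, Function.bijective_id, ?_⟩
  · by_contra hne
    obtain ⟨x, y, h⟩ := hub (@EMetric.diam X (mY' ()).toPseudoMetricSpace.toPseudoEMetricSpace
      Set.univ).toReal
    have h1 := @EMetric.edist_le_diam_of_mem X Set.univ x y
      (mY' ()).toPseudoMetricSpace.toPseudoEMetricSpace (Set.mem_univ _) (Set.mem_univ _)
    have h2 := ENNReal.toReal_mono hne h1
    rw [@edist_dist X (mY' ()).toPseudoMetricSpace, ENNReal.toReal_ofReal (@dist_nonneg X (mY' ()).toPseudoMetricSpace x y)] at h2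
    exact absurd h2 (not_le.2 h)
  · let G : realDistSet X → @realDistSet X (mY' ()) := fun t => ⟨g t, by
      obtain ⟨t, x, y, rfl⟩ := t
      exact ⟨x, y, rfl⟩⟩
    have hG : StrictMono G := fun a b hab => hg a.2 b.2 hab
    have hGs : Function.Surjective G := by
      rintro ⟨t, x, y, rfl⟩
      exact ⟨⟨dist x y, x, y, rfl⟩, rfl⟩
    let e := hG.orderIsoOfSurjective G hGs
    refine ⟨e.symm, e.symm.strictMono, e.symm.bijective, fun x y => ?_⟩
    have : e ⟨dist x y, x, y, rfl⟩ = ⟨(mY' ()).dist x y, x, y, rfl⟩ := rfl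
    exact (congrArg Subtype.val ((e.symm_apply_eq).2 this.symm)).symm

/-- Let `(X,d)` be an ultrametric space with at least two points.
Then `(X,d)` is weakly similar to an unbounded ultrametric space if and only if
`diam X` does not belong to the distance set `D(X)` (i.e. the diameter is not
realized as a distance). -/
theorem weaklySimilar_unbounded_iff_diam_not_attained
    {X : Type u} [MetricSpace X] [IsUltrametricDist X] [Nontrivial X] :
    (∃ (Y : Type u) (mY : MetricSpace Y),
        @IsUnboundedUltrametric Y mY ∧ @WeaklySimilar X Y _ mY) ↔
      EMetric.diam (Set.univ : Set X) ∉ {t : ℝ≥0∞ | ∃ x y : X, edist x y = t} := by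
  constructor
  · rintro ⟨Y, mY, ⟨_, hdiam⟩, Φ, hΦ, f, hf, _, hd⟩ ⟨a, b, hab⟩
    have key : ∀ u v : Y, edist u v ≤ edist (Φ a) (Φ b) := by
      intro u v
      obtain ⟨x, rfl⟩ := hΦ.2 u
      obtain ⟨y, rfl⟩ := hΦ.2 v
      have h1 : edist x y ≤ edist a b := by
        rw [hab]
        exact EMetric.edist_le_diam_of_mem (Set.mem_univ _) (Set.mem_univ _)
      rw [edist_dist, edist_dist, ENNReal.ofReal_le_ofReal_iff dist_nonneg, hd, hd] at h1
      have h2 := hf.le_iff_le.1 (Subtype.coe_le_coe.1 h1)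
      rw [edist_dist, edist_dist]
      exact ENNReal.ofReal_le_ofReal h2
    have : EMetric.diam (Set.univ : Set Y) ≤ edist (Φ a) (Φ b) :=
      EMetric.diam_le fun u _ v _ => key u v
    rw [hdiam] at this
    exact edist_ne_top _ _ (top_le_iff.1 this)
  · intro hn
    have hlt : ∀ x y : X, edist x y < EMetric.diam (Set.univ : Set X) := fun x y =>
      lt_of_le_of_ne (EMetric.edist_le_diam_of_mem (Set.mem_univ _) (Set.mem_univ _))
        fun h => hn ⟨x, y, h⟩
    have hbig : ∀ c : ℝ, ENNReal.ofReal c < EMetric.diam (Set.univ : Set X) →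
        ∃ x y : X, c < dist x y := by
      intro c hc
      by_contra! hcon
      refine absurd (EMetric.diam_le fun x _ y _ => ?_) (not_le.2 hc)
      rw [edist_dist]
      exact ENNReal.ofReal_le_ofReal (hcon x y)
    by_cases htop : EMetric.diam (Set.univ : Set X) = ⊤
    · refine exists_of_strictMonoOn id (strictMono_id.strictMonoOn _) rfl fun M => ?_
      exact hbig M (by rw [htop]; exact ENNReal.ofReal_lt_top)
    · obtain ⟨D, hD⟩ : ∃ D, D = (EMetric.diam (Set.univ : Set X)).toReal := ⟨_, rfl⟩
      have hDe : EMetric.diam (Set.univ : Set X) = ENNReal.ofReal D := by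
        rw [hD, ENNReal.ofReal_toReal htop]
      have hltD : ∀ x y : X, dist x y < D := by
        intro x y
        have := hlt x y
        rw [hDe, edist_dist] at this
        exact (ENNReal.ofReal_lt_ofReal_iff'.1 this).1
      obtain ⟨x0⟩ : Nonempty X := inferInstance
      have hDpos : 0 < D := by simpa using hltD x0 x0
      refine exists_of_strictMonoOn (fun t => t / (D - t)) ?_ (by simp) ?_
      · rintro _ ⟨x, y, rfl⟩ _ ⟨z, w, rfl⟩ h
        have h1 := hltD x y
        have h2 := hltD z w
        change dist x y / (D - dist x y) < dist z w / (D - dist z w)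
        rw [div_lt_div_iff₀ (by linarith) (by linarith)]
        nlinarith
      · intro M
        have hM : 0 < |M| + 1 := by positivity
        obtain ⟨x, y, h⟩ := hbig (|M| * D / (|M| + 1)) (by
          rw [hDe, ENNReal.ofReal_lt_ofReal_iff hDpos, div_lt_iff₀ hM]
          nlinarith)
        refine ⟨x, y, lt_of_le_of_lt (le_abs_self M) ?_⟩
        have h1 := hltD x y
        change |M| < dist x y / (D - dist x y)
        rw [lt_div_iff₀ (by linarith)]
        rw [div_lt_iff₀ hM] at h
        nlinarith
end

section
/- Define d⁺ : [0,∞) × [0,∞) → [0,∞) by d⁺(p,q) = max{p,q} if p ≠ q and d⁺(p,q) = 0 otherwise. Then d⁺ is an ultrametric on [0,∞) and the center of distances of the ultrametric space ([0,∞), d⁺) equals {0}. -/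
open scoped Classical NNReal

/-- The Delhommé–Laflamme–Pouzet–Sauer distance on `[0,∞)`:
`d⁺(p,q) = max {p,q}` if `p ≠ q`, and `d⁺(p,q) = 0` otherwise. -/
noncomputable def dplus (p q : ℝ≥0) : ℝ :=
  if p = q then 0 else max (p : ℝ) (q : ℝ)

/-- The map `d⁺` is an ultrametric on `[0,∞)` and the center of
distances of the ultrametric space `([0,∞), d⁺)` equals `{0}`. -/
theorem dplus_isUltrametric_and_center_eq_zero :
    IsUltrametricOn dplus ∧
      {t : ℝ | (∃ x y : ℝ≥0, dplus x y = t) ∧ ∀ p : ℝ≥0, ∃ x : ℝ≥0, dplus p x = t}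
        = {0} := by
  refine ⟨⟨?_, ?_, ?_, ?_⟩, ?_⟩
  · intro u v
    unfold dplus
    simp only [eq_comm, max_comm]
  · intro u
    simp [dplus]
  · intro u v h
    unfold dplus
    rw [if_neg h]
    rcases lt_or_gt_of_ne h with h | h
    · exact lt_max_of_lt_right (lt_of_le_of_lt u.2 (NNReal.coe_lt_coe.2 h))
    · exact lt_max_of_lt_left (lt_of_le_of_lt v.2 (NNReal.coe_lt_coe.2 h))
  · intro x y z
    have hx : (0:ℝ) ≤ x := x.2
    have hy : (0:ℝ) ≤ y := y.2
    have hz : (0:ℝ) ≤ z := z.2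
    unfold dplus
    by_cases h1 : x = z
    · subst h1
      simp
    · by_cases h2 : z = y
      · subst h2
        simp
      · rw [if_neg h1, if_neg h2]
        split_ifs
        · exact le_max_of_le_left (le_max_of_le_left hx)
        · exact max_le_max (le_max_left _ _) (le_max_right _ _)
  · ext t
    simp only [Set.mem_ofPred_eq, Set.mem_singleton_iff]
    constructor
    · rintro ⟨⟨a, b, hab⟩, h⟩
      have ht : 0 ≤ t := by
        rw [← hab]
        unfold dplus
        split_ifs
        · exact le_rfl
        · exact le_max_of_le_left a.2
      obtain ⟨x, hx⟩ := h (t.toNNReal + 1)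
      unfold dplus at hx
      split_ifs at hx
      · exact hx.symm
      · exfalso
        have h3 := le_max_left ((t.toNNReal + 1 : ℝ≥0) : ℝ) (x : ℝ)
        rw [hx, NNReal.coe_add, Real.coe_toNNReal t ht, NNReal.coe_one] at h3
        linarith
    · rintro rfl
      exact ⟨⟨0, 0, by simp [dplus]⟩, fun p => ⟨p, by simp [dplus]⟩⟩
end
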